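/- arXiv:2207.12343 — 5 statements merged into one kernel-verified Lean document; each statement's English description precedes it below -/
import Mathlib

section
/- Let a ∈ ℝ, β > 0, T > 0, let g : [0,T] → (0,∞) be continuous, and let E : [0,T] → ℝ be differentiable with E(0) > 0 and E′(t) ≥ a·E(t) + 2^(−β)·g(t)·E(t)^(1+β) for all t ∈ [0,T]. Then 2^(−β)·β·∫₀ᵀ g(s)·e^(βas) ds < E(0)^(−β); equivalently, T is strictly smaller than the first time t at which ∫₀ᵗ g(s)·e^(βas) ds ≥ 2^β·β^(−1)·E(0)^(−β). -/
/-!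
With the constant `2^(-β)` absorbed into `g`, the integrating factor `e^(-at)` turns the inequality
into `F' ≥ h F^(1+β)` for `F t = e^(-at) E t` and `h t = g t e^(βat)`. As `F' ≥ 0` while `F > 0`,
the function `F` never drops below its positive initial value. Hence
`(-F^(-β))' = β F^(-β-1) F' ≥ β h`, and integrating gives
`β ∫ h ≤ F(0)^(-β) - F(T)^(-β) < F(0)^(-β)`.
-/

open Set Filter Topology MeasureTheory

section Bernoulli

variable {F F' : ℝ → ℝ} {a b : ℝ}

lemma le_of_deriv_right_nonneg_of_lt {m : ℝ} (hF : ContinuousOn F (Icc a b))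
    (hF' : ∀ x ∈ Ico a b, HasDerivWithinAt F (F' x) (Ici x) x)
    (hm : m < F a) (hnonneg : ∀ x ∈ Ico a b, m < F x → 0 ≤ F' x)
    {t : ℝ} (ht : t ∈ Icc a b) : F a ≤ F t := by
  -- Compare with lines of slope `-ε` that stay above `m`: at a contact point `F' ≥ 0 > -ε`.
  have line_le : ∀ ε > 0, m < F a - ε * (b - a) → F a - ε * (t - a) ≤ F t := by
    intro ε hε hmε
    have hline : ∀ x, HasDerivAt (fun x ↦ ε * (x - a) - F a) ε x := fun x ↦ by
      simpa using (((hasDerivAt_id x).sub_const a).const_mul ε).sub_const (F a)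
    have neg_le : -F t ≤ ε * (t - a) - F a := by
      refine image_le_of_deriv_right_lt_deriv_boundary hF.neg (fun x hx ↦ (hF' x hx).neg)
        (by simp) hline (fun x hx hcontact ↦ ?_) ht
      have hxb : ε * (x - a) ≤ ε * (b - a) := by gcongr; exact hx.2.le
      have hFx : F x = F a - ε * (x - a) := by
        rw [Pi.neg_apply] at hcontact
        linarith
      have hF'x : 0 ≤ F' x := hnonneg x hx (by linarith)
      linarith
    linarith
  have tendsto_line (y : ℝ) : Tendsto (fun ε ↦ F a - ε * (y - a)) (𝓝[>] 0) (𝓝 (F a)) := by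
    have hcont : Continuous fun ε ↦ F a - ε * (y - a) := by fun_prop
    simpa using (hcont.tendsto 0).mono_left nhdsWithin_le_nhds
  refine le_of_tendsto (tendsto_line t) ?_
  filter_upwards [self_mem_nhdsWithin, (tendsto_line b).eventually_const_lt hm] with ε hε hmε
  exact line_le ε hε hmε

variable {h : ℝ → ℝ} {β : ℝ}

lemma pos_of_mul_rpow_le_deriv_right (hF : ContinuousOn F (Icc a b))
    (hF' : ∀ x ∈ Ico a b, HasDerivWithinAt F (F' x) (Ici x) x) (hFa : 0 < F a)
    (hh : ∀ x ∈ Ico a b, 0 ≤ h x)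
    (hineq : ∀ x ∈ Ico a b, 0 < F x → h x * F x ^ (1 + β) ≤ F' x)
    {t : ℝ} (ht : t ∈ Icc a b) : 0 < F t :=
  hFa.trans_le <| le_of_deriv_right_nonneg_of_lt hF hF' hFa
    (fun x hx hFx ↦ (mul_nonneg (hh x hx) (by positivity)).trans (hineq x hx hFx)) ht

lemma mul_integral_le_rpow_neg_sub_rpow_neg (hβ : 0 ≤ β) (hab : a ≤ b)
    (hF : ContinuousOn F (Icc a b))
    (hF' : ∀ x ∈ Ico a b, HasDerivWithinAt F (F' x) (Ici x) x) (hFa : 0 < F a)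
    (hh : ∀ x ∈ Ico a b, 0 ≤ h x) (hint : IntervalIntegrable h volume a b)
    (hineq : ∀ x ∈ Ico a b, 0 < F x → h x * F x ^ (1 + β) ≤ F' x) :
    β * ∫ x in a..b, h x ≤ F a ^ (-β) - F b ^ (-β) := by
  have hFpos : ∀ x ∈ Icc a b, 0 < F x := fun x hx ↦
    pos_of_mul_rpow_le_deriv_right hF hF' hFa hh hineq hx
  have hderiv : ∀ x ∈ Ioo a b,
      HasDerivWithinAt (fun x ↦ -F x ^ (-β)) (-(F' x * -β * F x ^ (-β - 1))) (Ioi x) x :=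
    fun x hx ↦ (((hF' x (Ioo_subset_Ico_self hx)).rpow_const
      (.inl (hFpos x (Ioo_subset_Icc_self hx)).ne')).neg).mono Ioi_subset_Ici_self
  have hle : ∀ x ∈ Ioo a b, β * h x ≤ -(F' x * -β * F x ^ (-β - 1)) := by
    intro x hx
    have hFx : 0 < F x := hFpos x (Ioo_subset_Icc_self hx)
    have hcancel : F x ^ (1 + β) * F x ^ (-β - 1) = 1 := by
      rw [← Real.rpow_add hFx, show 1 + β + (-β - 1) = 0 by ring, Real.rpow_zero]
    calc β * h x = β * (h x * F x ^ (1 + β) * F x ^ (-β - 1)) := by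
          rw [mul_assoc (h x), hcancel, mul_one]
      _ ≤ β * (F' x * F x ^ (-β - 1)) := by
          gcongr
          exact hineq x (Ioo_subset_Ico_self hx) hFx
      _ = -(F' x * -β * F x ^ (-β - 1)) := by ring
  have hcont : ContinuousOn (fun x ↦ -F x ^ (-β)) (Icc a b) :=
    (hF.rpow_const fun x hx ↦ .inl (hFpos x hx).ne').neg
  have hintegral := intervalIntegral.integral_le_sub_of_hasDeriv_right_of_le hab hcont hderiv
    ((intervalIntegrable_iff_integrableOn_Icc_of_le hab).1 (hint.const_mul β)) hle
  rw [intervalIntegral.integral_const_mul] at hintegral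
  linarith

end Bernoulli

lemma hasDerivWithinAt_mul_exp_neg {f : ℝ → ℝ} {f' t : ℝ} {s : Set ℝ} (a : ℝ)
    (hf : HasDerivWithinAt f f' s t) :
    HasDerivWithinAt (fun t ↦ f t * Real.exp (-a * t)) ((f' - a * f t) * Real.exp (-a * t)) s t :=
  (hf.mul ((hasDerivAt_const_mul (-a)).exp.hasDerivWithinAt)).congr_deriv (by ring)

lemma exp_mul_mul_exp_neg_rpow {y : ℝ} (hy : 0 ≤ y) (a β t : ℝ) :
    Real.exp (β * a * t) * (y * Real.exp (-a * t)) ^ (1 + β) =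
      y ^ (1 + β) * Real.exp (-a * t) := by
  rw [Real.mul_rpow hy (Real.exp_nonneg _), ← Real.exp_mul, mul_left_comm, ← Real.exp_add]
  ring_nf

theorem stmt3_general {a β T : ℝ} (hβ : 0 ≤ β) (hT : 0 ≤ T) {g E E' : ℝ → ℝ}
    (hg : IntervalIntegrable g volume 0 T) (hg_nonneg : ∀ t ∈ Ico 0 T, 0 ≤ g t)
    (hE0 : 0 < E 0) (hE : ContinuousOn E (Icc 0 T))
    (hE' : ∀ t ∈ Ico 0 T, HasDerivWithinAt E (E' t) (Ici t) t)
    (hineq : ∀ t ∈ Ico 0 T, 0 < E t → a * E t + g t * E t ^ (1 + β) ≤ E' t) :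
    β * ∫ s in 0..T, g s * Real.exp (β * a * s) < E 0 ^ (-β) := by
  let F t := E t * Real.exp (-a * t)
  let h t := g t * Real.exp (β * a * t)
  have hF0 : F 0 = E 0 := by simp [F]
  have hF0_pos : 0 < F 0 := hF0 ▸ hE0
  have hF : ContinuousOn F (Icc 0 T) := hE.mul (by fun_prop)
  have hF' : ∀ t ∈ Ico 0 T, HasDerivWithinAt F ((E' t - a * E t) * Real.exp (-a * t)) (Ici t) t :=
    fun t ht ↦ hasDerivWithinAt_mul_exp_neg a (hE' t ht)
  have hh : ∀ t ∈ Ico 0 T, 0 ≤ h t := fun t ht ↦ mul_nonneg (hg_nonneg t ht) (Real.exp_nonneg _)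
  have hint : IntervalIntegrable h volume 0 T := hg.mul_continuousOn (by fun_prop)
  have hbernoulli : ∀ t ∈ Ico 0 T, 0 < F t →
      h t * F t ^ (1 + β) ≤ (E' t - a * E t) * Real.exp (-a * t) := by
    intro t ht hFt
    have hEt : 0 < E t := pos_of_mul_pos_left hFt (Real.exp_nonneg _)
    rw [mul_assoc, exp_mul_mul_exp_neg_rpow hEt.le, ← mul_assoc]
    gcongr
    linarith [hineq t ht hEt]
  have hFT : 0 < F T :=
    pos_of_mul_rpow_le_deriv_right hF hF' hF0_pos hh hbernoulli (right_mem_Icc.2 hT)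
  calc β * ∫ s in 0..T, h s ≤ F 0 ^ (-β) - F T ^ (-β) :=
        mul_integral_le_rpow_neg_sub_rpow_neg hβ hT hF hF' hF0_pos hh hint hbernoulli
    _ < F 0 ^ (-β) := sub_lt_self _ (by positivity)
    _ = E 0 ^ (-β) := by rw [hF0]

/-- Pathwise content of Case 1 of Theorem 4.1: if a positive quantity `E`
satisfies `E' ≥ a·E + 2^(-β)·g·E^(1+β)` on `[0,T]`, then
`2^(-β)·β·∫₀ᵀ g(s)·e^(βas) ds < E(0)^(-β)`, i.e. `T` is strictly smaller than
the first time the exponential functional reaches `2^β·β⁻¹·E(0)^(-β)`. -/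
theorem stmt3 (a β T : ℝ) (hβ : 0 < β) (hT : 0 < T)
    (g E E' : ℝ → ℝ)
    (hg : ContinuousOn g (Set.Icc 0 T))
    (hgpos : ∀ t ∈ Set.Icc (0:ℝ) T, 0 < g t)
    (hE0 : 0 < E 0)
    (hE : ∀ t ∈ Set.Icc (0:ℝ) T, HasDerivWithinAt E (E' t) (Set.Icc 0 T) t)
    (hineq : ∀ t ∈ Set.Icc (0:ℝ) T,
      a * E t + (2:ℝ) ^ (-β) * g t * E t ^ (1 + β) ≤ E' t) :
    (2:ℝ) ^ (-β) * β * ∫ s in (0:ℝ)..T, g s * Real.exp (β * a * s)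
      < E 0 ^ (-β) := by
  have hlt := stmt3_general (g := fun t ↦ 2 ^ (-β) * g t) hβ.le hT.le
    ((hg.intervalIntegrable_of_Icc hT.le).const_mul _)
    (fun t ht ↦ mul_nonneg (by positivity) (hgpos t (Ico_subset_Icc_self ht)).le) hE0
    (fun t ht ↦ (hE t ht).continuousWithinAt)
    (fun t ht ↦ (hE t (Ico_subset_Icc_self ht)).mono_of_mem_nhdsWithin (Icc_mem_nhdsGE_of_mem ht))
    (fun t ht _ ↦ hineq t (Ico_subset_Icc_self ht))
  simpa only [mul_assoc, mul_left_comm β, intervalIntegral.integral_const_mul] using hlt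
end

section
/- Let a ∈ ℝ, β₂ > 0, κ > 0, δ ≥ 0, T > 0, let g : [0,T] → (0,∞) be continuous, and let E : [0,T] → ℝ be differentiable with E(0) > 0, E(t) ≥ E(0) for all t ∈ [0,T], κ − δ·E(0)^(−(1+β₂)) > 0, and E′(t) ≥ a·E(t) + g(t)·(κ·E(t)^(1+β₂) − δ) for all t ∈ [0,T]. Then ∫₀ᵀ g(s)·e^(β₂as) ds < [ β₂·E(0)^(β₂)·(κ − δ·E(0)^(−(1+β₂))) ]^(−1). -/
/-!
Since `E ≥ E 0` and `δ ≥ 0`, the constant `δ` can be absorbed into the power: with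
`c = κ - δ * E 0 ^ (-(1 + β))` one has `κ * E ^ (1 + β) - δ ≥ c * E ^ (1 + β)`. What remains is a
Bernoulli differential inequality `E' ≥ a * E + c * g * E ^ (1 + β)`. If `A' = a`, the classical
substitution `v = E ^ (-β) * exp (β * A)` linearizes it to `v' ≤ -β * c * g * exp (β * A)`.
Integrating bounds `β * c * ∫ g * exp (β * A)` by the total decrease of `v`, which is less than
the initial value of `v` because `v` stays positive.
-/

open Set

theorem sub_mul_rpow_neg_mul_rpow_le {x₀ x q κ δ : ℝ} (hx₀ : 0 < x₀) (hx : x₀ ≤ x) (hq : 0 ≤ q)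
    (hδ : 0 ≤ δ) : (κ - δ * x₀ ^ (-q)) * x ^ q ≤ κ * x ^ q - δ := by
  have hratio : 1 ≤ x₀ ^ (-q) * x ^ q := by
    rw [Real.rpow_neg hx₀.le, ← div_eq_inv_mul, one_le_div (by positivity)]
    exact Real.rpow_le_rpow hx₀.le hx hq
  linarith [mul_le_mul_of_nonneg_left hratio hδ]

theorem hasDerivWithinAt_rpow_neg_mul_exp {u A : ℝ → ℝ} {u' a β t : ℝ} {s : Set ℝ}
    (hu : HasDerivWithinAt u u' s t) (hA : HasDerivWithinAt A a s t) (hut : u t ≠ 0) :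
    HasDerivWithinAt (fun r ↦ u r ^ (-β) * Real.exp (β * A r))
      (-β * ((u' - a * u t) * u t ^ (-(1 + β)) * Real.exp (β * A t))) s t := by
  have hexponent : -(1 + β) = -β - 1 := by ring
  have hpow : u t ^ (-β) = u t * u t ^ (-β - 1) := by
    rw [Real.rpow_sub_one hut, mul_div_cancel₀ _ hut]
  refine ((hu.rpow_const (p := -β) (Or.inl hut)).mul (hA.const_mul β).exp).congr_deriv ?_
  rw [hexponent, hpow]
  ring

section Interval

variable {u u' A a : ℝ → ℝ} {β t₀ t₁ : ℝ}

theorem mul_integral_mul_exp_le_of_bernoulli {h : ℝ → ℝ} (hβ : 0 ≤ β) (ht : t₀ ≤ t₁)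
    (hu : ContinuousOn u (Icc t₀ t₁)) (hpos : ∀ t ∈ Icc t₀ t₁, 0 < u t)
    (hu' : ∀ t ∈ Ioo t₀ t₁, HasDerivWithinAt u (u' t) (Ioi t) t)
    (hA : ContinuousOn A (Icc t₀ t₁))
    (hA' : ∀ t ∈ Ioo t₀ t₁, HasDerivWithinAt A (a t) (Ioi t) t)
    (hh : MeasureTheory.IntegrableOn h (Icc t₀ t₁))
    (hineq : ∀ t ∈ Ioo t₀ t₁, a t * u t + h t * u t ^ (1 + β) ≤ u' t) :
    β * ∫ s in t₀..t₁, h s * Real.exp (β * A s) ≤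
      u t₀ ^ (-β) * Real.exp (β * A t₀) - u t₁ ^ (-β) * Real.exp (β * A t₁) := by
  have hexp : ContinuousOn (fun t ↦ Real.exp (β * A t)) (Icc t₀ t₁) := by fun_prop
  have hv : ContinuousOn (fun t ↦ u t ^ (-β) * Real.exp (β * A t)) (Icc t₀ t₁) :=
    (hu.rpow_const fun t ht ↦ Or.inl (hpos t ht).ne').mul hexp
  have hdecay : ∀ t ∈ Ioo t₀ t₁,
      -β * ((u' t - a t * u t) * u t ^ (-(1 + β)) * Real.exp (β * A t)) ≤
        -β * (h t * Real.exp (β * A t)) := by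
    intro t ht
    have hut : 0 < u t := hpos t (Ioo_subset_Icc_self ht)
    refine mul_le_mul_of_nonpos_left ?_ (neg_nonpos.mpr hβ)
    gcongr
    rw [Real.rpow_neg hut.le, ← div_eq_mul_inv, le_div_iff₀ (by positivity)]
    linarith [hineq t ht]
  have hchange := intervalIntegral.sub_le_integral_of_hasDeriv_right_of_le ht hv
    (fun t ht ↦ hasDerivWithinAt_rpow_neg_mul_exp (hu' t ht) (hA' t ht)
      (hpos t (Ioo_subset_Icc_self ht)).ne')
    ((hh.mul_continuousOn hexp isCompact_Icc).const_mul (-β)) hdecay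
  rw [intervalIntegral.integral_const_mul] at hchange
  linarith

theorem stmt6_general {g : ℝ → ℝ} {κ δ : ℝ} (hβ : 0 < β) (hδ : 0 ≤ δ) (ht : t₀ ≤ t₁)
    (hg : MeasureTheory.IntegrableOn g (Icc t₀ t₁)) (hg_nonneg : ∀ t ∈ Ioo t₀ t₁, 0 ≤ g t)
    (hA : ContinuousOn A (Icc t₀ t₁))
    (hA' : ∀ t ∈ Ioo t₀ t₁, HasDerivWithinAt A (a t) (Ioi t) t)
    (hu : ContinuousOn u (Icc t₀ t₁))
    (hu' : ∀ t ∈ Ioo t₀ t₁, HasDerivWithinAt u (u' t) (Ioi t) t)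
    (hu₀ : 0 < u t₀) (hle : ∀ t ∈ Icc t₀ t₁, u t₀ ≤ u t)
    (hκδ : 0 < κ - δ * u t₀ ^ (-(1 + β)))
    (hineq : ∀ t ∈ Ioo t₀ t₁, a t * u t + g t * (κ * u t ^ (1 + β) - δ) ≤ u' t) :
    ∫ s in t₀..t₁, g s * Real.exp (β * A s) <
      Real.exp (β * A t₀) / (β * u t₀ ^ β * (κ - δ * u t₀ ^ (-(1 + β)))) := by
  set c := κ - δ * u t₀ ^ (-(1 + β))
  have hpos : ∀ t ∈ Icc t₀ t₁, 0 < u t := fun t ht ↦ hu₀.trans_le (hle t ht)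
  have hbernoulli : ∀ t ∈ Ioo t₀ t₁, a t * u t + c * g t * u t ^ (1 + β) ≤ u' t := by
    intro t ht
    have habsorb : c * u t ^ (1 + β) ≤ κ * u t ^ (1 + β) - δ :=
      sub_mul_rpow_neg_mul_rpow_le hu₀ (hle t (Ioo_subset_Icc_self ht)) (by positivity) hδ
    linarith [hineq t ht, mul_le_mul_of_nonneg_left habsorb (hg_nonneg t ht)]
  have hbound := mul_integral_mul_exp_le_of_bernoulli hβ.le ht hu hpos hu' hA hA'
    (hg.const_mul c) hbernoulli
  have hend : 0 < u t₁ ^ (-β) * Real.exp (β * A t₁) :=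
    mul_pos (Real.rpow_pos_of_pos (hpos t₁ (right_mem_Icc.mpr ht)) _) (Real.exp_pos _)
  have hlt : β * (c * ∫ s in t₀..t₁, g s * Real.exp (β * A s)) <
      Real.exp (β * A t₀) / u t₀ ^ β := by
    rw [← intervalIntegral.integral_const_mul, div_eq_inv_mul, ← Real.rpow_neg hu₀.le]
    simp only [← mul_assoc]
    linarith
  rw [lt_div_iff₀ (by positivity)] at hlt ⊢
  linarith

end Interval

/-- Scalar pathwise reduction underlying Case 2 of Theorem 4.1: if `E ≥ E(0) > 0`
satisfies `E' ≥ a·E + g·(κ·E^(1+β₂) − δ)` on `[0,T]` with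
`κ − δ·E(0)^(-(1+β₂)) > 0`, then
`∫₀ᵀ g(s)·e^(β₂as) ds < [β₂·E(0)^(β₂)·(κ − δ·E(0)^(-(1+β₂)))]⁻¹`. -/
theorem stmt6 (a β₂ κ δ T : ℝ) (hβ₂ : 0 < β₂) (hκ : 0 < κ) (hδ : 0 ≤ δ)
    (hT : 0 < T)
    (g E E' : ℝ → ℝ)
    (hg : ContinuousOn g (Set.Icc 0 T))
    (hgpos : ∀ t ∈ Set.Icc (0:ℝ) T, 0 < g t)
    (hE0 : 0 < E 0)
    (hEmono : ∀ t ∈ Set.Icc (0:ℝ) T, E 0 ≤ E t)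
    (hκδ : 0 < κ - δ * E 0 ^ (-(1 + β₂)))
    (hE : ∀ t ∈ Set.Icc (0:ℝ) T, HasDerivWithinAt E (E' t) (Set.Icc 0 T) t)
    (hineq : ∀ t ∈ Set.Icc (0:ℝ) T,
      a * E t + g t * (κ * E t ^ (1 + β₂) - δ) ≤ E' t) :
    ∫ s in (0:ℝ)..T, g s * Real.exp (β₂ * a * s)
      < (β₂ * E 0 ^ β₂ * (κ - δ * E 0 ^ (-(1 + β₂))))⁻¹ := by
  have hderiv : ∀ t ∈ Ioo 0 T, HasDerivWithinAt E (E' t) (Ioi t) t := fun t ht ↦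
    ((hE t (Ioo_subset_Icc_self ht)).hasDerivAt (Icc_mem_nhds ht.1 ht.2)).hasDerivWithinAt
  simpa [mul_assoc] using stmt6_general hβ₂ hδ hT.le hg.integrableOn_Icc
    (fun t ht ↦ (hgpos t (Ioo_subset_Icc_self ht)).le)
    (A := (a * ·)) (by fun_prop) (fun t _ ↦ (hasDerivAt_const_mul a).hasDerivWithinAt)
    (fun t ht ↦ (hE t ht).continuousWithinAt) hderiv hE0 hEmono hκδ
    (fun t ht ↦ hineq t (Ioo_subset_Icc_self ht))
end

section
/- Let β₁ > β₂ > 0, set D₁ = ((β₁−β₂)/(1+β₁))·((1+β₁)/(1+β₂))^((1+β₂)/(β₁−β₂)), and let a ∈ ℝ, T > 0, g : [0,T] → (0,∞) continuous, and h₁, h₂ : [0,T] → [0,∞) differentiable with h₁′(t) ≥ a·h₁(t) + g(t)·h₂(t)^(1+β₁) and h₂′(t) ≥ a·h₂(t) + g(t)·h₁(t)^(1+β₂) for all t ∈ [0,T]. Write E = h₁ + h₂ and suppose E(0) > 0, E(t) ≥ E(0) for all t ∈ [0,T], and that ε₀ satisfies 0 < ε₀ ≤ min{1, (h₂(0)/D₁^(1/(1+β₂)))^(β₁−β₂)}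 and 2^(−(1+β₂))·ε₀·E(0)^(1+β₂) > ε₀^((1+β₁)/(β₁−β₂))·D₁. Then ∫₀ᵀ g(s)·e^(β₂as) ds < [ β₂·E(0)^(β₂)·( ε₀·2^(−(1+β₂)) − ε₀^((1+β₁)/(β₁−β₂))·D₁·E(0)^(−(1+β₂)) ) ]^(−1). -/
/-!
Young's inequality trades the larger exponent `1 + β₁` for the smaller one at the price of an
additive constant, and `E ≥ E(0)` absorbs that constant into a multiple of `E ^ (1 + β₂)`. So
`E = h₁ + h₂` satisfies the Bernoulli inequality `E' ≥ a E + C g E ^ (1 + β₂)`, where `C > 0` is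
the last factor of the threshold. It makes `E(t) ^ (-β₂) e ^ (β₂ a t)` decrease at rate at least
`β₂ C g(t) e ^ (β₂ a t)`; since this quantity stays positive, the integral of the rate is smaller
than its initial value `E(0) ^ (-β₂)`.
-/

open Set MeasureTheory

section PowerInequalities

variable {p q ε D x y : ℝ}

-- The constant is sharp: equality holds at `x = (ε * q / p) ^ (1 / (p - q))`.
theorem mul_rpow_le_rpow_add_rpow_mul (hq : 0 < q) (hqp : q < p) (hε : 0 ≤ ε) (hx : 0 ≤ x) :
    ε * x ^ q ≤ x ^ p + ε ^ (p / (p - q)) * ((p - q) / p * (q / p) ^ (q / (p - q))) := by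
  have hp : 0 < p := hq.trans hqp
  have hd : 0 < p - q := sub_pos.2 hqp
  have hconj : (p / q).HolderConjugate (p / (p - q)) := by
    rw [Real.holderConjugate_iff]
    exact ⟨(one_lt_div hq).2 hqp, by field_simp; ring⟩
  -- The weight `r` makes the first term of Young's inequality exactly `x ^ p`.
  set r : ℝ := (q / p) ^ (q / p) with hr
  have hr0 : 0 < r := Real.rpow_pos_of_pos (div_pos hq hp) _
  have hfirst : (x ^ q / r) ^ (p / q) / (p / q) = x ^ p := by
    rw [Real.div_rpow (Real.rpow_nonneg hx q) hr0.le, ← Real.rpow_mul hx, hr,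
      ← Real.rpow_mul (by positivity), mul_div_cancel₀ _ hq.ne',
      div_mul_div_cancel₀ hp.ne', div_self hq.ne', Real.rpow_one]
    field_simp
  have hsecond : (ε * r) ^ (p / (p - q)) / (p / (p - q)) =
      ε ^ (p / (p - q)) * ((p - q) / p * (q / p) ^ (q / (p - q))) := by
    rw [Real.mul_rpow hε hr0.le, hr, ← Real.rpow_mul (by positivity), div_mul_div_cancel₀ hp.ne']
    field_simp
  calc ε * x ^ q = x ^ q / r * (ε * r) := by field_simp
    _ ≤ (x ^ q / r) ^ (p / q) / (p / q) + (ε * r) ^ (p / (p - q)) / (p / (p - q)) :=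
      Real.young_inequality_of_nonneg (by positivity) (by positivity) hconj
    _ = _ := by rw [hfirst, hsecond]

theorem sub_div_mul_div_rpow_le_swap (hq : 0 < q) (hqp : q < p) :
    (p - q) / p * (q / p) ^ (q / (p - q)) ≤ (p - q) / p * (p / q) ^ (q / (p - q)) := by
  have hp : 0 < p := hq.trans hqp
  have : 0 < p - q := sub_pos.2 hqp
  have hratio : q / p ≤ p / q := ((div_lt_one hp).2 hqp).le.trans ((one_lt_div hq).2 hqp).le
  gcongr

theorem two_rpow_neg_mul_add_rpow_le (hq : 0 ≤ q) (hx : 0 ≤ x) (hy : 0 ≤ y) :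
    (2 : ℝ) ^ (-q) * (x + y) ^ q ≤ x ^ q + y ^ q := by
  wlog hxy : x ≤ y generalizing x y
  · simpa only [add_comm] using this hy hx (le_of_not_ge hxy)
  calc (2 : ℝ) ^ (-q) * (x + y) ^ q ≤ 2 ^ (-q) * (2 * y) ^ q := by gcongr; linarith
    _ = y ^ q := by
      rw [Real.mul_rpow zero_le_two hy, Real.rpow_neg zero_le_two,
        inv_mul_cancel_left₀ (by positivity)]
    _ ≤ x ^ q + y ^ q := le_add_of_nonneg_left (Real.rpow_nonneg hx q)

theorem mul_add_rpow_le_rpow_add_rpow {m : ℝ} (hq : 0 < q) (hqp : q < p)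
    (hD : (p - q) / p * (q / p) ^ (q / (p - q)) ≤ D) (hε : 0 ≤ ε) (hε1 : ε ≤ 1)
    (hx : 0 ≤ x) (hy : 0 ≤ y) (hm : 0 < m) (hmxy : m ≤ x + y) :
    (ε * 2 ^ (-q) - ε ^ (p / (p - q)) * D * m ^ (-q)) * (x + y) ^ q ≤ x ^ q + y ^ p := by
  have hp : 0 < p := hq.trans hqp
  have hD0 : 0 ≤ D := le_trans (by have := sub_pos.2 hqp; positivity) hD
  set K := ε ^ (p / (p - q)) * D with hK
  have hyoung : ε * y ^ q ≤ y ^ p + K :=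
    (mul_rpow_le_rpow_add_rpow_mul hq hqp hε hy).trans (by rw [hK]; gcongr)
  have habsorb : K ≤ K * m ^ (-q) * (x + y) ^ q := by
    rw [mul_assoc]
    refine le_mul_of_one_le_right (by positivity) ?_
    rw [Real.rpow_neg hm.le, ← div_eq_inv_mul, one_le_div (by positivity)]
    gcongr
  calc (ε * 2 ^ (-q) - K * m ^ (-q)) * (x + y) ^ q
      = ε * (2 ^ (-q) * (x + y) ^ q) - K * m ^ (-q) * (x + y) ^ q := by ring
    _ ≤ ε * (x ^ q + y ^ q) - K := by
      gcongr
      exact two_rpow_neg_mul_add_rpow_le hq.le hx hy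
    _ ≤ x ^ q + y ^ p := by
      have : ε * x ^ q ≤ x ^ q := mul_le_of_le_one_left (Real.rpow_nonneg hx q) hε1
      linarith

end PowerInequalities

section BernoulliInequality

variable {a β t₀ t₁ : ℝ} {u u' g : ℝ → ℝ}

theorem hasDerivWithinAt_neg_rpow_neg_mul_exp {s : Set ℝ} {t v : ℝ}
    (hu : HasDerivWithinAt u v s t) (ht : u t ≠ 0) :
    HasDerivWithinAt (fun τ ↦ -(u τ ^ (-β) * Real.exp (β * a * τ)))
      (β * Real.exp (β * a * t) * u t ^ (-β - 1) * (v - a * u t)) s t := by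
  have hexp : HasDerivAt (fun τ ↦ Real.exp (β * a * τ)) (Real.exp (β * a * t) * (β * a)) t := by
    simpa only [id, mul_one] using ((hasDerivAt_id t).const_mul (β * a)).exp
  have hpow : u t ^ (-β) = u t ^ (-β - 1) * u t := by
    rw [← Real.rpow_add_one ht, sub_add_cancel]
  refine ((hu.rpow_const (p := -β) (Or.inl ht)).mul hexp.hasDerivWithinAt).neg.congr_deriv ?_
  rw [hpow]
  ring

theorem integral_le_of_bernoulli_le_deriv (hβ : 0 ≤ β) (ht : t₀ ≤ t₁)
    (hg : IntegrableOn g (Icc t₀ t₁)) (hu : ContinuousOn u (Icc t₀ t₁))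
    (hpos : ∀ t ∈ Icc t₀ t₁, 0 < u t)
    (hderiv : ∀ t ∈ Ioo t₀ t₁, HasDerivWithinAt u (u' t) (Ioi t) t)
    (hle : ∀ t ∈ Ioo t₀ t₁, a * u t + g t * u t ^ (1 + β) ≤ u' t) :
    β * ∫ s in t₀..t₁, g s * Real.exp (β * a * s) ≤
      u t₀ ^ (-β) * Real.exp (β * a * t₀) - u t₁ ^ (-β) * Real.exp (β * a * t₁) := by
  have hcont : ContinuousOn (fun t ↦ -(u t ^ (-β) * Real.exp (β * a * t))) (Icc t₀ t₁) :=
    ((hu.rpow_const fun t ht ↦ Or.inl (hpos t ht).ne').mul (by fun_prop)).neg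
  have hint : IntegrableOn (fun s ↦ β * (g s * Real.exp (β * a * s))) (Icc t₀ t₁) :=
    (hg.mul_continuousOn (by fun_prop) isCompact_Icc).const_mul β
  have hrate : ∀ t ∈ Ioo t₀ t₁, β * (g t * Real.exp (β * a * t)) ≤
      β * Real.exp (β * a * t) * u t ^ (-β - 1) * (u' t - a * u t) := by
    intro t ht
    have hut : 0 < u t := hpos t (Ioo_subset_Icc_self ht)
    have hcancel : u t ^ (-β - 1) * u t ^ (1 + β) = 1 := by
      rw [← Real.rpow_add hut, show -β - 1 + (1 + β) = 0 by ring, Real.rpow_zero]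
    calc β * (g t * Real.exp (β * a * t))
        = β * Real.exp (β * a * t) * u t ^ (-β - 1) * (g t * u t ^ (1 + β)) := by
          linear_combination -(β * g t * Real.exp (β * a * t)) * hcancel
      _ ≤ _ := by
          gcongr
          exact le_sub_iff_add_le'.2 (hle t ht)
  have hftc := intervalIntegral.integral_le_sub_of_hasDeriv_right_of_le ht hcont
    (fun t ht ↦ hasDerivWithinAt_neg_rpow_neg_mul_exp (hderiv t ht)
      (hpos t (Ioo_subset_Icc_self ht)).ne') hint hrate
  rw [intervalIntegral.integral_const_mul] at hftc
  linarith

theorem integral_lt_of_bernoulli_le_deriv {C : ℝ} (hβ : 0 < β) (hC : 0 < C) (ht : t₀ ≤ t₁)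
    (hg : IntegrableOn g (Icc t₀ t₁)) (hu : ContinuousOn u (Icc t₀ t₁))
    (hpos : ∀ t ∈ Icc t₀ t₁, 0 < u t)
    (hderiv : ∀ t ∈ Ioo t₀ t₁, HasDerivWithinAt u (u' t) (Ioi t) t)
    (hle : ∀ t ∈ Ioo t₀ t₁, a * u t + C * g t * u t ^ (1 + β) ≤ u' t) :
    ∫ s in t₀..t₁, g s * Real.exp (β * a * s) <
      (β * u t₀ ^ β * C)⁻¹ * Real.exp (β * a * t₀) := by
  have hbound := integral_le_of_bernoulli_le_deriv hβ.le ht (hg.const_mul C) hu hpos hderiv hle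
  have hu₀ : 0 < u t₀ := hpos t₀ (left_mem_Icc.2 ht)
  have hend : 0 < u t₁ ^ (-β) * Real.exp (β * a * t₁) := by
    have := hpos t₁ (right_mem_Icc.2 ht)
    positivity
  simp only [mul_assoc C, intervalIntegral.integral_const_mul] at hbound
  rw [mul_right_comm, mul_inv, mul_assoc, ← Real.rpow_neg hu₀.le, lt_inv_mul_iff₀ (by positivity)]
  linarith

end BernoulliInequality

theorem stmt7_general {β₁ β₂ a T ε₀ D₁ : ℝ} (hβ₂ : 0 < β₂) (hβ : β₂ < β₁) (hT : 0 ≤ T)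
    (hD₁ : (β₁ - β₂) / (1 + β₁) * ((1 + β₂) / (1 + β₁)) ^ ((1 + β₂) / (β₁ - β₂)) ≤ D₁)
    {g h₁ h₂ h₁' h₂' : ℝ → ℝ}
    (hg : IntegrableOn g (Icc 0 T))
    (hg0 : ∀ t ∈ Icc 0 T, 0 ≤ g t)
    (hh₁0 : ∀ t ∈ Icc 0 T, 0 ≤ h₁ t)
    (hh₂0 : ∀ t ∈ Icc 0 T, 0 ≤ h₂ t)
    (hd₁ : ∀ t ∈ Icc 0 T, HasDerivWithinAt h₁ (h₁' t) (Icc 0 T) t)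
    (hd₂ : ∀ t ∈ Icc 0 T, HasDerivWithinAt h₂ (h₂' t) (Icc 0 T) t)
    (hi₁ : ∀ t ∈ Icc 0 T, a * h₁ t + g t * h₂ t ^ (1 + β₁) ≤ h₁' t)
    (hi₂ : ∀ t ∈ Icc 0 T, a * h₂ t + g t * h₁ t ^ (1 + β₂) ≤ h₂' t)
    (hE0 : 0 < h₁ 0 + h₂ 0)
    (hEmono : ∀ t ∈ Icc 0 T, h₁ 0 + h₂ 0 ≤ h₁ t + h₂ t)
    (hε₀0 : 0 ≤ ε₀) (hε₀1 : ε₀ ≤ 1)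
    (hcond : ε₀ ^ ((1 + β₁) / (β₁ - β₂)) * D₁
      < (2 : ℝ) ^ (-(1 + β₂)) * ε₀ * (h₁ 0 + h₂ 0) ^ (1 + β₂)) :
    ∫ s in 0..T, g s * Real.exp (β₂ * a * s)
      < (β₂ * (h₁ 0 + h₂ 0) ^ β₂ *
          (ε₀ * (2 : ℝ) ^ (-(1 + β₂)) -
            ε₀ ^ ((1 + β₁) / (β₁ - β₂)) * D₁ * (h₁ 0 + h₂ 0) ^ (-(1 + β₂))))⁻¹ := by
  set C := ε₀ * (2 : ℝ) ^ (-(1 + β₂)) -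
    ε₀ ^ ((1 + β₁) / (β₁ - β₂)) * D₁ * (h₁ 0 + h₂ 0) ^ (-(1 + β₂)) with hC
  have hC0 : 0 < C := by
    rw [hC, Real.rpow_neg hE0.le, ← div_eq_mul_inv, sub_pos, div_lt_iff₀ (by positivity)]
    rwa [mul_comm ε₀]
  have hderiv : ∀ t ∈ Icc 0 T,
      HasDerivWithinAt (fun t ↦ h₁ t + h₂ t) (h₁' t + h₂' t) (Icc 0 T) t :=
    fun t ht ↦ (hd₁ t ht).add (hd₂ t ht)
  have hbernoulli : ∀ t ∈ Icc 0 T,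
      a * (h₁ t + h₂ t) + C * g t * (h₁ t + h₂ t) ^ (1 + β₂) ≤ h₁' t + h₂' t := by
    intro t ht
    have hpow : C * (h₁ t + h₂ t) ^ (1 + β₂) ≤ h₁ t ^ (1 + β₂) + h₂ t ^ (1 + β₁) := by
      have h := mul_add_rpow_le_rpow_add_rpow (p := 1 + β₁) (q := 1 + β₂) (D := D₁) (by linarith)
        (by linarith) (by rwa [add_sub_add_left_eq_sub]) hε₀0 hε₀1 (hh₁0 t ht) (hh₂0 t ht) hE0
        (hEmono t ht)
      rwa [add_sub_add_left_eq_sub] at h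
    linarith [mul_le_mul_of_nonneg_left hpow (hg0 t ht), hi₁ t ht, hi₂ t ht]
  simpa only [mul_zero, Real.exp_zero, mul_one] using integral_lt_of_bernoulli_le_deriv hβ₂ hC0 hT
    hg (fun t ht ↦ (hderiv t ht).continuousWithinAt) (fun t ht ↦ hE0.trans_le (hEmono t ht))
    (fun t ht ↦ (hderiv t (Ioo_subset_Icc_self ht)).mono_of_mem_nhdsWithin
      (Icc_mem_nhdsGT_of_mem ⟨ht.1.le, ht.2⟩))
    (fun t ht ↦ hbernoulli t (Ioo_subset_Icc_self ht))

/-- Pathwise form of Case 2 of Theorem 4.1 for the system of differential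
inequalities with unequal nonlinearity exponents `β₁ > β₂`: the exponential
functional `∫₀ᵀ g(s)·e^(β₂as) ds` stays strictly below the threshold defining
the upper blow-up bound `τ₂*`. -/
theorem stmt7 (β₁ β₂ a T ε₀ D₁ : ℝ) (hβ₂ : 0 < β₂) (hβ : β₂ < β₁) (hT : 0 < T)
    (hD₁ : D₁ = ((β₁ - β₂) / (1 + β₁)) *
      ((1 + β₁) / (1 + β₂)) ^ ((1 + β₂) / (β₁ - β₂)))
    (g h₁ h₂ h₁' h₂' : ℝ → ℝ)
    (hg : ContinuousOn g (Set.Icc 0 T))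
    (hgpos : ∀ t ∈ Set.Icc (0:ℝ) T, 0 < g t)
    (hh₁0 : ∀ t ∈ Set.Icc (0:ℝ) T, 0 ≤ h₁ t)
    (hh₂0 : ∀ t ∈ Set.Icc (0:ℝ) T, 0 ≤ h₂ t)
    (hd₁ : ∀ t ∈ Set.Icc (0:ℝ) T, HasDerivWithinAt h₁ (h₁' t) (Set.Icc 0 T) t)
    (hd₂ : ∀ t ∈ Set.Icc (0:ℝ) T, HasDerivWithinAt h₂ (h₂' t) (Set.Icc 0 T) t)
    (hi₁ : ∀ t ∈ Set.Icc (0:ℝ) T, a * h₁ t + g t * h₂ t ^ (1 + β₁) ≤ h₁' t)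
    (hi₂ : ∀ t ∈ Set.Icc (0:ℝ) T, a * h₂ t + g t * h₁ t ^ (1 + β₂) ≤ h₂' t)
    (hE0 : 0 < h₁ 0 + h₂ 0)
    (hEmono : ∀ t ∈ Set.Icc (0:ℝ) T, h₁ 0 + h₂ 0 ≤ h₁ t + h₂ t)
    (hε₀pos : 0 < ε₀)
    (hε₀ : ε₀ ≤ min 1 ((h₂ 0 / D₁ ^ (1 / (1 + β₂))) ^ (β₁ - β₂)))
    (hcond : ε₀ ^ ((1 + β₁) / (β₁ - β₂)) * D₁
      < (2:ℝ) ^ (-(1 + β₂)) * ε₀ * (h₁ 0 + h₂ 0) ^ (1 + β₂)) :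
    ∫ s in (0:ℝ)..T, g s * Real.exp (β₂ * a * s)
      < (β₂ * (h₁ 0 + h₂ 0) ^ β₂ *
          (ε₀ * (2:ℝ) ^ (-(1 + β₂)) -
            ε₀ ^ ((1 + β₁) / (β₁ - β₂)) * D₁ * (h₁ 0 + h₂ 0) ^ (-(1 + β₂))))⁻¹ := by
  have hconst := sub_div_mul_div_rpow_le_swap (add_pos one_pos hβ₂) (add_lt_add_right hβ 1)
  rw [add_sub_add_left_eq_sub, ← hD₁] at hconst
  exact stmt7_general hβ₂ hβ hT.le hconst hg.integrableOn_Icc (fun t ht ↦ (hgpos t ht).le)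
    hh₁0 hh₂0 hd₁ hd₂ hi₁ hi₂ hE0 hEmono hε₀pos.le (hε₀.trans (min_le_left _ _)) hcond
end

section
/- Let 1/2 < H < α, let ρ₁, ρ₂ ∈ ℝ, and let L > 0. Then sup_{t ≥ 0} (2ρ₁²·t + 2ρ₂²·t^(2H))/(L + t^α)² ≤ (ρ₁²·(2α−1)^(2−1/α)/α²)·L^(1/α−2) + 2ρ₂²·((α−H)/α)^(2−2H/α)·L^(2H/α−2). -/
/-!
With `u = t ^ α` each of the two terms is a multiple of `(u ^ θ / (L + u)) ^ 2` for some
`θ ∈ [0, 1]`, namely `θ = 1 / (2 * α)` and `θ = H / α`. Weighted AM-GM applied to `u / θ` and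
`L / (1 - θ)` gives the maximum of `u ^ θ / (L + u)` over `u ≥ 0`, attained where these two numbers
agree. The stated constants are weaker than the ones obtained in this way: the first is doubled, and
the second omits the factor `(H / α) ^ (2 * H / α) ≤ 1`.
-/

theorem rpow_mul_rpow_le_mul_add {a b u v : ℝ} (ha : 0 ≤ a) (hb : 0 ≤ b) (hab : a + b = 1)
    (hu : 0 ≤ u) (hv : 0 ≤ v) : u ^ a * v ^ b ≤ a ^ a * b ^ b * (u + v) := by
  rcases ha.eq_or_lt with rfl | ha
  · obtain rfl : b = 1 := by linarith
    simpa using hu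
  rcases hb.eq_or_lt with rfl | hb
  · obtain rfl : a = 1 := by linarith
    simpa using hv
  have am_gm : (u / a) ^ a * (v / b) ^ b ≤ a * (u / a) + b * (v / b) :=
    Real.geom_mean_le_arith_mean2_weighted ha.le hb.le (by positivity) (by positivity) hab
  rwa [Real.div_rpow hu ha.le, Real.div_rpow hv hb.le, mul_div_cancel₀ _ ha.ne',
    mul_div_cancel₀ _ hb.ne', div_mul_div_comm, div_le_iff₀' (by positivity)] at am_gm

theorem rpow_div_add_le {θ u L : ℝ} (hθ₀ : 0 ≤ θ) (hθ₁ : θ ≤ 1) (hu : 0 ≤ u) (hL : 0 < L) :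
    u ^ θ / (L + u) ≤ θ ^ θ * (1 - θ) ^ (1 - θ) * L ^ (θ - 1) := by
  have hLθ : 0 < L ^ (1 - θ) := Real.rpow_pos_of_pos hL _
  have key : u ^ θ * L ^ (1 - θ) ≤ θ ^ θ * (1 - θ) ^ (1 - θ) * (u + L) :=
    rpow_mul_rpow_le_mul_add hθ₀ (sub_nonneg.2 hθ₁) (add_sub_cancel θ 1) hu hL.le
  rw [← neg_sub 1 θ, Real.rpow_neg hL.le, ← div_eq_mul_inv,
    div_le_div_iff₀ (by positivity) hLθ, add_comm L u]
  exact key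

section

variable {α L t : ℝ}

theorem rpow_div_add_rpow_sq_le {s : ℝ} (hα : 0 < α) (hs₀ : 0 ≤ s) (hs : s ≤ 2 * α) (hL : 0 < L)
    (ht : 0 ≤ t) :
    t ^ s / (L + t ^ α) ^ 2 ≤
      (s / (2 * α)) ^ (s / α) * (1 - s / (2 * α)) ^ (2 - s / α) * L ^ (s / α - 2) := by
  set θ := s / (2 * α) with hθ
  have hθ₀ : 0 ≤ θ := by positivity
  have hθ₁ : θ ≤ 1 := div_le_one_of_le₀ hs (by positivity)
  have hsα : s / α = θ * 2 := by rw [hθ]; field_simp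
  have hts : t ^ s = ((t ^ α) ^ θ) ^ 2 := by
    rw [← Real.rpow_mul ht, ← Real.rpow_mul_natCast ht, hθ]
    congr 1
    push_cast
    field_simp
  calc t ^ s / (L + t ^ α) ^ 2 = ((t ^ α) ^ θ / (L + t ^ α)) ^ 2 := by rw [hts, div_pow]
    _ ≤ (θ ^ θ * (1 - θ) ^ (1 - θ) * L ^ (θ - 1)) ^ 2 := by
      gcongr
      exact rpow_div_add_le hθ₀ hθ₁ (by positivity) hL
    _ = θ ^ (s / α) * (1 - θ) ^ (2 - s / α) * L ^ (s / α - 2) := by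
      rw [mul_pow, mul_pow, ← Real.rpow_mul_natCast hθ₀,
        ← Real.rpow_mul_natCast (sub_nonneg.2 hθ₁), ← Real.rpow_mul_natCast hL.le, hsα]
      push_cast
      ring_nf

theorem div_add_rpow_sq_le (hα : 1 / 2 ≤ α) (hL : 0 < L) (ht : 0 ≤ t) :
    t / (L + t ^ α) ^ 2 ≤ (2 * α - 1) ^ (2 - 1 / α) / (2 * α) ^ 2 * L ^ (1 / α - 2) := by
  have hα₀ : 0 < α := by linarith
  have constant_eq : (1 / (2 * α)) ^ (1 / α) * (1 - 1 / (2 * α)) ^ (2 - 1 / α) =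
      (2 * α - 1) ^ (2 - 1 / α) / (2 * α) ^ 2 := by
    rw [one_sub_div (by positivity), Real.div_rpow zero_le_one (by positivity),
      Real.div_rpow (by linarith) (by positivity), Real.one_rpow, div_mul_div_comm, one_mul,
      ← Real.rpow_add (by positivity), add_sub_cancel, Real.rpow_two]
  simpa only [Real.rpow_one, constant_eq] using
    rpow_div_add_rpow_sq_le (s := 1) hα₀ zero_le_one (by linarith) hL ht

theorem rpow_two_mul_div_add_rpow_sq_le {H : ℝ} (hα : 0 < α) (hH : 0 ≤ H) (hHα : H ≤ α)
    (hL : 0 < L) (ht : 0 ≤ t) :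
    t ^ (2 * H) / (L + t ^ α) ^ 2 ≤
      ((α - H) / α) ^ (2 - 2 * H / α) * L ^ (2 * H / α - 2) := by
  have : 0 ≤ (α - H) / α := div_nonneg (sub_nonneg.2 hHα) hα.le
  have factor_le_one : (H / α) ^ (2 * H / α) ≤ 1 :=
    Real.rpow_le_one (by positivity) (div_le_one_of_le₀ hHα hα.le) (by positivity)
  calc t ^ (2 * H) / (L + t ^ α) ^ 2
      ≤ (H / α) ^ (2 * H / α) * ((α - H) / α) ^ (2 - 2 * H / α) * L ^ (2 * H / α - 2) := by
        simpa only [mul_div_mul_left H α two_ne_zero, one_sub_div hα.ne'] using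
          rpow_div_add_rpow_sq_le hα (by positivity) (by linarith : 2 * H ≤ 2 * α) hL ht
    _ ≤ 1 * ((α - H) / α) ^ (2 - 2 * H / α) * L ^ (2 * H / α - 2) := by gcongr
    _ = ((α - H) / α) ^ (2 - 2 * H / α) * L ^ (2 * H / α - 2) := by rw [one_mul]

theorem stmt12_general {H : ℝ} (ρ₁ ρ₂ : ℝ) (hα : 1 / 2 ≤ α) (hH : 0 ≤ H) (hHα : H ≤ α)
    (hL : 0 < L) (ht : 0 ≤ t) :
    (2 * ρ₁ ^ 2 * t + 2 * ρ₂ ^ 2 * t ^ (2 * H)) / (L + t ^ α) ^ 2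
      ≤ ρ₁ ^ 2 * (2 * α - 1) ^ (2 - 1 / α) / α ^ 2 * L ^ (1 / α - 2)
        + 2 * ρ₂ ^ 2 * ((α - H) / α) ^ (2 - 2 * H / α) * L ^ (2 * H / α - 2) := by
  have hα₀ : 0 < α := by linarith
  have constant_nonneg : 0 ≤ (2 * α - 1) ^ (2 - 1 / α) := Real.rpow_nonneg (by linarith) _
  calc (2 * ρ₁ ^ 2 * t + 2 * ρ₂ ^ 2 * t ^ (2 * H)) / (L + t ^ α) ^ 2
      = 2 * ρ₁ ^ 2 * (t / (L + t ^ α) ^ 2)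
        + 2 * ρ₂ ^ 2 * (t ^ (2 * H) / (L + t ^ α) ^ 2) := by ring
    _ ≤ 2 * ρ₁ ^ 2 * ((2 * α - 1) ^ (2 - 1 / α) / (2 * α) ^ 2 * L ^ (1 / α - 2))
        + 2 * ρ₂ ^ 2 * (((α - H) / α) ^ (2 - 2 * H / α) * L ^ (2 * H / α - 2)) := by
      gcongr
      · exact div_add_rpow_sq_le hα hL ht
      · exact rpow_two_mul_div_add_rpow_sq_le hα₀ hH hHα hL ht
    _ = ρ₁ ^ 2 * (2 * α - 1) ^ (2 - 1 / α) / α ^ 2 * L ^ (1 / α - 2) / 2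
        + 2 * ρ₂ ^ 2 * ((α - H) / α) ^ (2 - 2 * H / α) * L ^ (2 * H / α - 2) := by ring
    _ ≤ ρ₁ ^ 2 * (2 * α - 1) ^ (2 - 1 / α) / α ^ 2 * L ^ (1 / α - 2)
        + 2 * ρ₂ ^ 2 * ((α - H) / α) ^ (2 - 2 * H / α) * L ^ (2 * H / α - 2) := by
      gcongr
      exact half_le_self (by positivity)

end

/-- Explicit bound on `M_x = sup_{t≥0} (2ρ₁²t+2ρ₂²t^(2H))/(L+t^α)²` from the
proof of Theorem 6.5, for `1/2 < H < α` and `L > 0`. -/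
theorem stmt12 (H α ρ₁ ρ₂ L : ℝ) (hH : 1 / 2 < H) (hHα : H < α) (hL : 0 < L) :
    ∀ t : ℝ, 0 ≤ t →
      (2 * ρ₁ ^ 2 * t + 2 * ρ₂ ^ 2 * t ^ (2 * H)) / (L + t ^ α) ^ 2
        ≤ ρ₁ ^ 2 * (2 * α - 1) ^ (2 - 1 / α) / α ^ 2 * L ^ (1 / α - 2)
          + 2 * ρ₂ ^ 2 * ((α - H) / α) ^ (2 - 2 * H / α) * L ^ (2 * H / α - 2) := by
  intro t ht
  exact stmt12_general ρ₁ ρ₂ (hH.trans hHα).le (by linarith) hHα.le hL ht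
end

section
/- Let c₁, c₂ ∈ ℝ, β > 0, T > 0, let g₁, g₂ : [0,T] → (0,∞) be continuous, and let h₁, h₂ : [0,T] → [0,∞) be differentiable with h₁(0)+h₂(0) > 0 and with h₁′(t) ≥ c₁·h₁(t) + g₁(t)·h₂(t)^(1+β) and h₂′(t) ≥ c₂·h₂(t) + g₂(t)·h₁(t)^(1+β) for all t ∈ [0,T]. Then, with a = min(c₁,c₂), one has 2^(−β)·β·∫₀ᵀ min(g₁(s),g₂(s))·e^(βas) ds < (h₁(0)+h₂(0))^(−β). -/
/-!
Let `a = min c₁ c₂`. The sum `h = h₁ + h₂` satisfies `h' ≥ a h + 2^(-β) min(g₁, g₂) h^(1+β)` by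
convexity of `x ↦ x^(1+β)`, so `u t = e^(-a t) h t` is nondecreasing, hence positive, and
`u' ≥ 2^(-β) min(g₁, g₂) e^(β a t) u^(1+β)`. Dividing by `u^(1+β)` bounds the derivative of
`-u^(-β)` from below; integrating over `[0, T]` leaves the deficit `u(T)^(-β) > 0`, which makes the
inequality strict.
-/

open MeasureTheory Set

section ScalarInequalities

variable {x y p γ₁ γ₂ : ℝ}

theorem two_rpow_one_sub_mul_add_rpow_le (hx : 0 ≤ x) (hy : 0 ≤ y) (hp : 1 ≤ p) :
    (2 : ℝ) ^ (1 - p) * (x + y) ^ p ≤ x ^ p + y ^ p := by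
  have mean_le : (x + y) ^ p ≤ 2 ^ (p - 1) * (x ^ p + y ^ p) := by
    lift x to NNReal using hx
    lift y to NNReal using hy
    exact_mod_cast NNReal.rpow_add_le_mul_rpow_add_rpow x y hp
  rwa [← neg_sub, Real.rpow_neg zero_le_two, inv_mul_le_iff₀ (by positivity)]

theorem two_rpow_one_sub_mul_min_mul_add_rpow_le (hγ₁ : 0 ≤ γ₁) (hγ₂ : 0 ≤ γ₂) (hx : 0 ≤ x)
    (hy : 0 ≤ y) (hp : 1 ≤ p) :
    (2 : ℝ) ^ (1 - p) * min γ₁ γ₂ * (x + y) ^ p ≤ γ₁ * y ^ p + γ₂ * x ^ p :=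
  calc (2 : ℝ) ^ (1 - p) * min γ₁ γ₂ * (x + y) ^ p
      = min γ₁ γ₂ * (2 ^ (1 - p) * (x + y) ^ p) := by ring
    _ ≤ min γ₁ γ₂ * (x ^ p + y ^ p) := by
        gcongr
        exact two_rpow_one_sub_mul_add_rpow_le hx hy hp
    _ = min γ₁ γ₂ * y ^ p + min γ₁ γ₂ * x ^ p := by ring
    _ ≤ γ₁ * y ^ p + γ₂ * x ^ p := by
        gcongr
        · exact min_le_left _ _
        · exact min_le_right _ _

theorem min_mul_add_le_mul_add_mul (c₁ c₂ : ℝ) (hx : 0 ≤ x) (hy : 0 ≤ y) :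
    min c₁ c₂ * (x + y) ≤ c₁ * x + c₂ * y := by
  rw [mul_add]
  gcongr
  · exact min_le_left _ _
  · exact min_le_right _ _

end ScalarInequalities

section DifferentialInequality

variable {a b c β : ℝ} {h h' u u' φ : ℝ → ℝ}

theorem le_of_hasDeriv_right_nonneg (hab : a ≤ b) (hu : ContinuousOn u (Icc a b))
    (hu' : ∀ t ∈ Ioo a b, HasDerivWithinAt u (u' t) (Ioi t) t)
    (hu'_nonneg : ∀ t ∈ Ioo a b, 0 ≤ u' t) : u a ≤ u b := by
  have integral_zero_le :=
    intervalIntegral.integral_le_sub_of_hasDeriv_right_of_le hab hu hu' integrableOn_zero hu'_nonneg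
  simpa only [intervalIntegral.integral_zero, sub_nonneg] using integral_zero_le

theorem mul_integral_le_rpow_neg_sub_rpow_neg_s15 (hab : a ≤ b) (hβ : 0 ≤ β)
    (hu : ContinuousOn u (Icc a b)) (hu' : ∀ t ∈ Ioo a b, HasDerivWithinAt u (u' t) (Ioi t) t)
    (hu_pos : ∀ t ∈ Icc a b, 0 < u t) (hφ : IntegrableOn φ (Icc a b))
    (hle : ∀ t ∈ Ioo a b, φ t * u t ^ (1 + β) ≤ u' t) :
    β * ∫ t in a..b, φ t ≤ u a ^ (-β) - u b ^ (-β) := by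
  have cont : ContinuousOn (fun t => -u t ^ (-β)) (Icc a b) :=
    (hu.rpow_const fun t ht => .inl (hu_pos t ht).ne').neg
  have deriv : ∀ t ∈ Ioo a b,
      HasDerivWithinAt (fun t => -u t ^ (-β)) (-(u' t * -β * u t ^ (-β - 1))) (Ioi t) t :=
    fun t ht => ((hu' t ht).rpow_const (.inl (hu_pos t (Ioo_subset_Icc_self ht)).ne')).neg
  have deriv_ge : ∀ t ∈ Ioo a b, β * φ t ≤ -(u' t * -β * u t ^ (-β - 1)) := by
    intro t ht
    have ut_pos := hu_pos t (Ioo_subset_Icc_self ht)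
    have rpow_mul_rpow : u t ^ (1 + β) * u t ^ (-β - 1) = 1 := by
      rw [← Real.rpow_add ut_pos, show 1 + β + (-β - 1) = 0 by ring, Real.rpow_zero]
    calc β * φ t = β * (φ t * u t ^ (1 + β)) * u t ^ (-β - 1) := by
          rw [mul_assoc, mul_assoc, rpow_mul_rpow, mul_one]
      _ ≤ β * u' t * u t ^ (-β - 1) := by
          gcongr
          exact hle t ht
      _ = -(u' t * -β * u t ^ (-β - 1)) := by ring
  rw [← intervalIntegral.integral_const_mul, ← neg_sub_neg]
  exact intervalIntegral.integral_le_sub_of_hasDeriv_right_of_le hab cont deriv (hφ.const_mul β)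
    deriv_ge

theorem hasDerivWithinAt_exp_neg_mul_mul {s : Set ℝ} {t d : ℝ} (c : ℝ)
    (hd : HasDerivWithinAt h d s t) :
    HasDerivWithinAt (fun r => Real.exp (-c * r) * h r)
      (Real.exp (-c * t) * (d - c * h t)) s t := by
  have exp_deriv := ((hasDerivAt_id' t).const_mul (-c)).exp.hasDerivWithinAt (s := s)
  exact (exp_deriv.mul hd).congr_deriv (by ring)

theorem pos_of_mul_le_hasDeriv_right (hh : ContinuousOn h (Icc a b))
    (hh' : ∀ t ∈ Ioo a b, HasDerivWithinAt h (h' t) (Ioi t) t)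
    (hle : ∀ t ∈ Ioo a b, c * h t ≤ h' t) (ha : 0 < h a) {t : ℝ} (ht : t ∈ Icc a b) :
    0 < h t := by
  have exp_mul_le : Real.exp (-c * a) * h a ≤ Real.exp (-c * t) * h t :=
    le_of_hasDeriv_right_nonneg (u := fun r => Real.exp (-c * r) * h r) ht.1
      (.mul (by fun_prop) (hh.mono (Icc_subset_Icc_right ht.2)))
      (fun r hr => hasDerivWithinAt_exp_neg_mul_mul c (hh' r (Ioo_subset_Ioo_right ht.2 hr)))
      (fun r hr => mul_nonneg (Real.exp_pos _).le
        (sub_nonneg.2 (hle r (Ioo_subset_Ioo_right ht.2 hr))))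
  exact pos_of_mul_pos_right ((mul_pos (Real.exp_pos _) ha).trans_le exp_mul_le) (Real.exp_pos _).le

theorem exp_mul_mul_exp_neg_mul_rpow {x : ℝ} (hx : 0 ≤ x) (β c t : ℝ) :
    Real.exp (β * c * t) * (Real.exp (-c * t) * x) ^ (1 + β) =
      Real.exp (-c * t) * x ^ (1 + β) := by
  rw [Real.mul_rpow (Real.exp_pos _).le hx, ← Real.exp_mul, ← mul_assoc, ← Real.exp_add]
  ring_nf

theorem mul_integral_mul_exp_le_rpow_neg_sub_rpow_neg (hab : a ≤ b) (hβ : 0 ≤ β)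
    (hh : ContinuousOn h (Icc a b)) (hh' : ∀ t ∈ Ioo a b, HasDerivWithinAt h (h' t) (Ioi t) t)
    (hh_pos : ∀ t ∈ Icc a b, 0 < h t) (hφ : IntegrableOn φ (Icc a b))
    (hle : ∀ t ∈ Ioo a b, c * h t + φ t * h t ^ (1 + β) ≤ h' t) :
    β * ∫ t in a..b, φ t * Real.exp (β * c * t) ≤
      (Real.exp (-c * a) * h a) ^ (-β) - (Real.exp (-c * b) * h b) ^ (-β) := by
  refine mul_integral_le_rpow_neg_sub_rpow_neg_s15 (u := fun t => Real.exp (-c * t) * h t) hab hβ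
    (.mul (by fun_prop) hh) (fun t ht => hasDerivWithinAt_exp_neg_mul_mul c (hh' t ht))
    (fun t ht => mul_pos (Real.exp_pos _) (hh_pos t ht))
    (hφ.mul_continuousOn (by fun_prop) isCompact_Icc) fun t ht => ?_
  calc φ t * Real.exp (β * c * t) * (Real.exp (-c * t) * h t) ^ (1 + β)
      = Real.exp (-c * t) * (φ t * h t ^ (1 + β)) := by
        rw [mul_assoc, exp_mul_mul_exp_neg_mul_rpow (hh_pos t (Ioo_subset_Icc_self ht)).le,
          mul_left_comm]
    _ ≤ Real.exp (-c * t) * (h' t - c * h t) := by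
        gcongr
        exact le_sub_iff_add_le'.2 (hle t ht)

theorem mul_integral_mul_exp_lt_rpow_neg (hab : a ≤ b) (hβ : 0 ≤ β)
    (hh : ContinuousOn h (Icc a b)) (hh' : ∀ t ∈ Ioo a b, HasDerivWithinAt h (h' t) (Ioi t) t)
    (hh_nonneg : ∀ t ∈ Ioo a b, 0 ≤ h t) (ha : 0 < h a) (hφ : IntegrableOn φ (Icc a b))
    (hφ_nonneg : ∀ t ∈ Ioo a b, 0 ≤ φ t)
    (hle : ∀ t ∈ Ioo a b, c * h t + φ t * h t ^ (1 + β) ≤ h' t) :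
    β * ∫ t in a..b, φ t * Real.exp (β * c * t) < (Real.exp (-c * a) * h a) ^ (-β) := by
  have mul_le : ∀ t ∈ Ioo a b, c * h t ≤ h' t := fun t ht =>
    (le_add_of_nonneg_right (mul_nonneg (hφ_nonneg t ht)
      (Real.rpow_nonneg (hh_nonneg t ht) _))).trans (hle t ht)
  have hh_pos : ∀ t ∈ Icc a b, 0 < h t := fun t ht =>
    pos_of_mul_le_hasDeriv_right hh hh' mul_le ha ht
  have end_pos : 0 < (Real.exp (-c * b) * h b) ^ (-β) :=
    Real.rpow_pos_of_pos (mul_pos (Real.exp_pos _) (hh_pos b (right_mem_Icc.2 hab))) _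
  exact (mul_integral_mul_exp_le_rpow_neg_sub_rpow_neg hab hβ hh hh' hh_pos hφ hle).trans_lt
    (sub_lt_self _ end_pos)

end DifferentialInequality

theorem stmt15_general {c₁ c₂ β T : ℝ} (hβ : 0 ≤ β) (hT : 0 ≤ T)
    {g₁ g₂ h₁ h₂ h₁' h₂' : ℝ → ℝ}
    (hg : IntegrableOn (fun t => min (g₁ t) (g₂ t)) (Icc 0 T))
    (hg₁ : ∀ t ∈ Ioo 0 T, 0 ≤ g₁ t) (hg₂ : ∀ t ∈ Ioo 0 T, 0 ≤ g₂ t)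
    (hc₁ : ContinuousOn h₁ (Icc 0 T)) (hc₂ : ContinuousOn h₂ (Icc 0 T))
    (hh₁ : ∀ t ∈ Ioo 0 T, 0 ≤ h₁ t) (hh₂ : ∀ t ∈ Ioo 0 T, 0 ≤ h₂ t)
    (hinit : 0 < h₁ 0 + h₂ 0)
    (hd₁ : ∀ t ∈ Ioo 0 T, HasDerivWithinAt h₁ (h₁' t) (Ioi t) t)
    (hd₂ : ∀ t ∈ Ioo 0 T, HasDerivWithinAt h₂ (h₂' t) (Ioi t) t)
    (hi₁ : ∀ t ∈ Ioo 0 T, c₁ * h₁ t + g₁ t * h₂ t ^ (1 + β) ≤ h₁' t)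
    (hi₂ : ∀ t ∈ Ioo 0 T, c₂ * h₂ t + g₂ t * h₁ t ^ (1 + β) ≤ h₂' t) :
    (2 : ℝ) ^ (-β) * β * ∫ s in (0 : ℝ)..T, min (g₁ s) (g₂ s) * Real.exp (β * min c₁ c₂ * s)
      < (h₁ 0 + h₂ 0) ^ (-β) := by
  have sum_ineq : ∀ t ∈ Ioo 0 T, min c₁ c₂ * (h₁ t + h₂ t) +
      2 ^ (-β) * min (g₁ t) (g₂ t) * (h₁ t + h₂ t) ^ (1 + β) ≤ h₁' t + h₂' t := by
    intro t ht
    have linear_le := min_mul_add_le_mul_add_mul c₁ c₂ (hh₁ t ht) (hh₂ t ht)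
    have power_le := two_rpow_one_sub_mul_min_mul_add_rpow_le (hg₁ t ht) (hg₂ t ht) (hh₁ t ht)
      (hh₂ t ht) (le_add_of_nonneg_right hβ)
    rw [sub_add_cancel_left] at power_le
    linarith [hi₁ t ht, hi₂ t ht]
  have bound := mul_integral_mul_exp_lt_rpow_neg (h := fun t => h₁ t + h₂ t) hT hβ (hc₁.add hc₂)
    (fun t ht => (hd₁ t ht).add (hd₂ t ht)) (fun t ht => add_nonneg (hh₁ t ht) (hh₂ t ht)) hinit
    (hg.const_mul (2 ^ (-β)))
    (fun t ht => mul_nonneg (by positivity) (le_min (hg₁ t ht) (hg₂ t ht))) sum_ineq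
  simpa only [mul_assoc, intervalIntegral.integral_const_mul, mul_left_comm β, mul_zero,
    Real.exp_zero, one_mul] using bound

/-- Pathwise content of Case 1 of Theorem 5.2 (upper bound `τ₁**` in the
general case, `β₁ = β₂ = β`, with two different exponential weights): if
`h₁' ≥ c₁·h₁ + g₁·h₂^(1+β)` and `h₂' ≥ c₂·h₂ + g₂·h₁^(1+β)` on `[0,T]` with
`h₁(0)+h₂(0) > 0`, then, with `a = min(c₁,c₂)`,
`2^(−β)·β·∫₀ᵀ min(g₁,g₂)(s)·e^(βas) ds < (h₁(0)+h₂(0))^(−β)`. -/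
theorem stmt15 (c₁ c₂ β T : ℝ) (hβ : 0 < β) (hT : 0 < T)
    (g₁ g₂ h₁ h₂ h₁' h₂' : ℝ → ℝ)
    (hg₁ : ContinuousOn g₁ (Set.Icc 0 T)) (hg₂ : ContinuousOn g₂ (Set.Icc 0 T))
    (hg₁pos : ∀ t ∈ Set.Icc (0:ℝ) T, 0 < g₁ t)
    (hg₂pos : ∀ t ∈ Set.Icc (0:ℝ) T, 0 < g₂ t)
    (hh₁0 : ∀ t ∈ Set.Icc (0:ℝ) T, 0 ≤ h₁ t)
    (hh₂0 : ∀ t ∈ Set.Icc (0:ℝ) T, 0 ≤ h₂ t)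
    (hinit : 0 < h₁ 0 + h₂ 0)
    (hd₁ : ∀ t ∈ Set.Icc (0:ℝ) T, HasDerivWithinAt h₁ (h₁' t) (Set.Icc 0 T) t)
    (hd₂ : ∀ t ∈ Set.Icc (0:ℝ) T, HasDerivWithinAt h₂ (h₂' t) (Set.Icc 0 T) t)
    (hi₁ : ∀ t ∈ Set.Icc (0:ℝ) T, c₁ * h₁ t + g₁ t * h₂ t ^ (1 + β) ≤ h₁' t)
    (hi₂ : ∀ t ∈ Set.Icc (0:ℝ) T, c₂ * h₂ t + g₂ t * h₁ t ^ (1 + β) ≤ h₂' t) :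
    (2:ℝ) ^ (-β) * β *
        ∫ s in (0:ℝ)..T, min (g₁ s) (g₂ s) * Real.exp (β * min c₁ c₂ * s)
      < (h₁ 0 + h₂ 0) ^ (-β) := by
  have Ioo_sub : Ioo 0 T ⊆ Icc 0 T := Ioo_subset_Icc_self
  have right_nhds t (ht : t ∈ Ioo 0 T) := Icc_mem_nhdsGT_of_mem (Ioo_subset_Ico_self ht)
  exact stmt15_general hβ.le hT.le (hg₁.inf hg₂).integrableOn_Icc
    (fun t ht => (hg₁pos t (Ioo_sub ht)).le) (fun t ht => (hg₂pos t (Ioo_sub ht)).le)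
    (fun t ht => (hd₁ t ht).continuousWithinAt) (fun t ht => (hd₂ t ht).continuousWithinAt)
    (fun t ht => hh₁0 t (Ioo_sub ht)) (fun t ht => hh₂0 t (Ioo_sub ht)) hinit
    (fun t ht => (hd₁ t (Ioo_sub ht)).mono_of_mem_nhdsWithin (right_nhds t ht))
    (fun t ht => (hd₂ t (Ioo_sub ht)).mono_of_mem_nhdsWithin (right_nhds t ht))
    (fun t ht => hi₁ t (Ioo_sub ht)) (fun t ht => hi₂ t (Ioo_sub ht))
end
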